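/- Let f be a constraint of arity k ≥ 3. If R_f admits a good factor list, then there exists a constraint h in COMP_1(f) ∪ COMP_2(f) such that R_h admits a good factor list. -/

import Mathlib

/-- A (complex-valued Boolean) constraint of arity `k`. -/
abbrev Constraint (k : ℕ) : Type := (Fin k → Bool) → ℂ

/-- The binary equality constraint `EQ = [1,0,1]`, as a two-argument function. -/
def EQc : Bool → Bool → ℂ := fun a b => if a = b then 1 else 0

/-- The binary disequality constraint `XOR = [0,1,0]`, as a two-argument function. -/
def XORc : Bool → Bool → ℂ := fun a b => if a = b then 0 else 1

/-- The binary constraint `Implies = (1,1,0,1)`, as a two-argument function. -/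
def IMPc : Bool → Bool → ℂ := fun a b => if a = true ∧ b = false then 0 else 1

/-- The unary constraint `[a, b]` (value `a` on input `0`, value `b` on input `1`). -/
def unC (a b : ℂ) : Constraint 1 := fun x => if x 0 then b else a

/-- The binary constraint `(a,b,c,d) = (f(0,0), f(0,1), f(1,0), f(1,1))`. -/
def binC (a b c d : ℂ) : Constraint 2 := fun x =>
  if x 0 then (if x 1 then d else c) else (if x 1 then b else a)

/-- `OR = [0,1,1]`. -/
def ORc : Constraint 2 := binC 0 1 1 1

/-- `Implies = (1,1,0,1)` as a binary constraint. -/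
def Impliesc : Constraint 2 := binC 1 1 0 1

/-- Membership in `NZ`: the constraint is everywhere nonzero. -/
def inNZ {k : ℕ} (f : Constraint k) : Prop := ∀ x, f x ≠ 0

/-- Membership in `DG`: the constraint is a product of unary constraints, one per variable. -/
def inDG {k : ℕ} (f : Constraint k) : Prop :=
  ∃ g : Fin k → Bool → ℂ, ∀ x, f x = ∏ i, g i (x i)

/-- Membership in `ED`: the constraint is a product of at least one factor, each factor
being a unary constraint applied to some variable, or `EQ`/`XOR` applied to two variables. -/
def inED {k : ℕ} (f : Constraint k) : Prop :=
  ∃ (l1 l2 : ℕ) (h : Fin l1 → Bool → ℂ) (j : Fin l1 → Fin k)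
    (g : Fin l2 → Bool → Bool → ℂ) (m n : Fin l2 → Fin k),
    1 ≤ l1 + l2 ∧ (∀ i, g i = EQc ∨ g i = XORc) ∧
    ∀ x, f x = (∏ i, h i (x (j i))) * ∏ i, g i (x (m i)) (x (n i))

/-- Membership in `IM`: `f ∉ NZ` and `f` is a product of at least one factor, each factor
being a unary constraint applied to some variable, or `Implies` applied to two variables. -/
def inIM {k : ℕ} (f : Constraint k) : Prop :=
  ¬ inNZ f ∧
  ∃ (l1 l2 : ℕ) (h : Fin l1 → Bool → ℂ) (j : Fin l1 → Fin k)
    (m n : Fin l2 → Fin k),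
    1 ≤ l1 + l2 ∧
    ∀ x, f x = (∏ i, h i (x (j i))) * ∏ i, IMPc (x (m i)) (x (n i))

/-- The underlying relation `R_f = {x : f x ≠ 0}` of a constraint `f`. -/
def relOf {k : ℕ} (f : Constraint k) : Set (Fin k → Bool) := {x | f x ≠ 0}

/-- Factors allowed in an IMP-style factorization of a relation:
`Δ_c(x_i)` or `Implies(x_i, x_j)`. -/
inductive ImpFactor (k : ℕ) where
  | delta (c : Bool) (i : Fin k)
  | imp (i j : Fin k)
deriving DecidableEq

/-- Evaluation of an IMP-factor at an assignment. -/
def ImpFactor.eval {k : ℕ} : ImpFactor k → (Fin k → Bool) → Bool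
  | .delta c i, x => x i == c
  | .imp i j, x => !(x i) || x j

/-- `L` is a factor list for the relation `R`: the conjunction of the factors in `L` equals `R`. -/
def isFactorListFor {k : ℕ} (L : List (ImpFactor k)) (R : Set (Fin k → Bool)) : Prop :=
  ∀ x, x ∈ R ↔ ∀ fac ∈ L, fac.eval x = true

/-- Membership in `IMP`: the relation is the conjunction of a positive number of factors of the
forms `Δ_0(x)`, `Δ_1(x)`, `Implies(x,y)`. -/
def inIMP {k : ℕ} (R : Set (Fin k → Bool)) : Prop :=
  ∃ L : List (ImpFactor k), L ≠ [] ∧ isFactorListFor L R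

/-- `f` has imp support when `R_f ∈ IMP`. -/
def hasImpSupport {k : ℕ} (f : Constraint k) : Prop := inIMP (relOf f)

/-- A factor list is imp-distinctive if no variable occurs both in a `Δ_c` factor and in an
`Implies` factor, and no factor `Implies(x,x)` occurs. -/
def impDistinctive {k : ℕ} (L : List (ImpFactor k)) : Prop :=
  (∀ i : Fin k, ¬ ((∃ c, ImpFactor.delta c i ∈ L) ∧
      (∃ j, ImpFactor.imp i j ∈ L ∨ ImpFactor.imp j i ∈ L))) ∧
  (∀ i : Fin k, ImpFactor.imp i i ∉ L)

/-- Factors of the forms `Δ_c(x_i)` or `EQ(x_i,x_j)`. -/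
inductive EqFactor (k : ℕ) where
  | delta (c : Bool) (i : Fin k)
  | eq (i j : Fin k)
deriving DecidableEq

/-- Evaluation of such a factor at an assignment. -/
def EqFactor.eval {k : ℕ} : EqFactor k → (Fin k → Bool) → Bool
  | .delta c i, x => x i == c
  | .eq i j, x => x i == x j

/-- `f` is in simple form: its representing Boolean matrix (rows indexed by `R_f`) has
no all-`0` column, no all-`1` column, and no two identical columns. -/
def simpleForm {k : ℕ} (f : Constraint k) : Prop :=
  (∀ i : Fin k, ∃ a, f a ≠ 0 ∧ a i = true) ∧
  (∀ i : Fin k, ∃ a, f a ≠ 0 ∧ a i = false) ∧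
  (∀ i j : Fin k, i ≠ j → ∃ a, f a ≠ 0 ∧ a i ≠ a j)

/-- A constraint of unspecified arity. -/
abbrev Ctr : Type := Σ k : ℕ, Constraint k

/-- T-constructibility of a constraint from a set `G` of constraints, by finitely many
applications of permutation, pinning, projection, linking, expansion, multiplication,
and normalization. -/
inductive TCon (G : Set Ctr) : Ctr → Prop where
  | base {c : Ctr} : c ∈ G → TCon G c
  | perm {k : ℕ} {g : Constraint k} (σ : Equiv.Perm (Fin k)) :
      TCon G ⟨k, g⟩ → TCon G ⟨k, fun x => g (fun i => x (σ i))⟩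
  | pinning {k : ℕ} {g : Constraint (k+1)} (i : Fin (k+1)) (c : Bool) :
      TCon G ⟨k+1, g⟩ → TCon G ⟨k, fun x => g (i.insertNth c x)⟩
  | proj {k : ℕ} {g : Constraint (k+1)} (i : Fin (k+1)) :
      TCon G ⟨k+1, g⟩ →
      TCon G ⟨k, fun x => g (i.insertNth false x) + g (i.insertNth true x)⟩
  | link {k : ℕ} {g : Constraint (k+1)} (i : Fin (k+1)) (j : Fin k) :
      TCon G ⟨k+1, g⟩ → TCon G ⟨k, fun x => g (i.insertNth (x j) x)⟩
  | expand {k : ℕ} {g : Constraint k} (i : Fin (k+1)) :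
      TCon G ⟨k, g⟩ → TCon G ⟨k+1, fun x => g (fun j => x (i.succAbove j))⟩
  | mul {k : ℕ} {g₁ g₂ : Constraint k} :
      TCon G ⟨k, g₁⟩ → TCon G ⟨k, g₂⟩ → TCon G ⟨k, fun x => g₁ x * g₂ x⟩
  | norm {k : ℕ} {g : Constraint k} (lam : ℂ) (hlam : lam ≠ 0) :
      TCon G ⟨k, g⟩ → TCon G ⟨k, fun x => lam * g x⟩

/-- T-constructibility using no projection operation. -/
inductive TConNoProj (G : Set Ctr) : Ctr → Prop where
  | base {c : Ctr} : c ∈ G → TConNoProj G c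
  | perm {k : ℕ} {g : Constraint k} (σ : Equiv.Perm (Fin k)) :
      TConNoProj G ⟨k, g⟩ → TConNoProj G ⟨k, fun x => g (fun i => x (σ i))⟩
  | pinning {k : ℕ} {g : Constraint (k+1)} (i : Fin (k+1)) (c : Bool) :
      TConNoProj G ⟨k+1, g⟩ → TConNoProj G ⟨k, fun x => g (i.insertNth c x)⟩
  | link {k : ℕ} {g : Constraint (k+1)} (i : Fin (k+1)) (j : Fin k) :
      TConNoProj G ⟨k+1, g⟩ → TConNoProj G ⟨k, fun x => g (i.insertNth (x j) x)⟩
  | expand {k : ℕ} {g : Constraint k} (i : Fin (k+1)) :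
      TConNoProj G ⟨k, g⟩ → TConNoProj G ⟨k+1, fun x => g (fun j => x (i.succAbove j))⟩
  | mul {k : ℕ} {g₁ g₂ : Constraint k} :
      TConNoProj G ⟨k, g₁⟩ → TConNoProj G ⟨k, g₂⟩ →
      TConNoProj G ⟨k, fun x => g₁ x * g₂ x⟩
  | norm {k : ℕ} {g : Constraint k} (lam : ℂ) (hlam : lam ≠ 0) :
      TConNoProj G ⟨k, g⟩ → TConNoProj G ⟨k, fun x => lam * g x⟩

/-- Pinning the `i`-th variable of `f` to the bit `c`. -/
def pinC {k : ℕ} (f : Constraint (k+1)) (i : Fin (k+1)) (c : Bool) : Constraint k :=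
  fun x => f (i.insertNth c x)

/-- `R_f` admits a good factor list: a factor list consisting only of `Implies` factors,
in which every variable is incident to at least one edge of the induced imp graph,
and whose imp graph has no (directed) cycle. -/
def hasGoodFactorList {k : ℕ} (f : Constraint k) : Prop :=
  ∃ L : List (ImpFactor k),
    isFactorListFor L (relOf f) ∧
    (∀ fac ∈ L, ∃ i j, fac = ImpFactor.imp i j) ∧
    (∀ i : Fin k, ∃ j, ImpFactor.imp i j ∈ L ∨ ImpFactor.imp j i ∈ L) ∧
    ¬ ∃ i : Fin k, Relation.TransGen (fun a b => ImpFactor.imp a b ∈ L) i i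

/-- A factor list made of `Implies` factors only, for `R_f`, with acyclic imp graph. -/
def preGood {k : ℕ} (L : List (ImpFactor k)) (f : Constraint k) : Prop :=
  isFactorListFor L (relOf f) ∧
    (∀ fac ∈ L, ∃ i j, fac = ImpFactor.imp i j) ∧
    ¬ ∃ i : Fin k, Relation.TransGen (fun a b => ImpFactor.imp a b ∈ L) i i

/-- Pinning a source to `0` or a sink to `1` deletes the vertex from the imp graph. -/
theorem preGood_pin {k : ℕ} (L : List (ImpFactor (k+1))) (f : Constraint (k+1))
    (h : preGood L f) (v : Fin (k+1)) (c : Bool)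
    (hv : (c = false ∧ ∀ a, ImpFactor.imp a v ∉ L) ∨ (c = true ∧ ∀ a, ImpFactor.imp v a ∉ L)) :
    ∃ L' : List (ImpFactor k), preGood L' (pinC f v c) ∧
      ∀ a b, ImpFactor.imp a b ∈ L' ↔ ImpFactor.imp (v.succAbove a) (v.succAbove b) ∈ L := by
  classical
  obtain ⟨h1, h2, h3⟩ := h
  let L' : List (ImpFactor k) :=
    (((Finset.univ : Finset (Fin k × Fin k)).filter
      (fun p => ImpFactor.imp (v.succAbove p.1) (v.succAbove p.2) ∈ L)).toList.map
      (fun p => ImpFactor.imp p.1 p.2))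
  have hL' : ∀ a b, ImpFactor.imp a b ∈ L' ↔
      ImpFactor.imp (v.succAbove a) (v.succAbove b) ∈ L := by
    intro a b
    simp [L']
  have hL'2 : ∀ fac ∈ L', ∃ i j, fac = ImpFactor.imp i j := by
    intro fac hfac
    simp only [L', List.mem_map] at hfac
    obtain ⟨p, _, rfl⟩ := hfac
    exact ⟨_, _, rfl⟩
  refine ⟨L', ⟨?_, hL'2, ?_⟩, hL'⟩
  · intro x
    have e : x ∈ relOf (pinC f v c) ↔ (v.insertNth c x : Fin (k+1) → Bool) ∈ relOf f := Iff.rfl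
    rw [e, h1]
    constructor
    · intro hx fac hfac
      obtain ⟨i, j, rfl⟩ := hL'2 fac hfac
      have := hx _ ((hL' i j).1 hfac)
      simpa [ImpFactor.eval] using this
    · intro hx fac hfac
      obtain ⟨i, j, rfl⟩ := h2 fac hfac
      rcases Fin.eq_self_or_eq_succAbove v i with rfl | ⟨a, rfl⟩
      · rcases hv with ⟨rfl, hv⟩ | ⟨rfl, hv⟩
        · simp [ImpFactor.eval]
        · exact absurd hfac (hv _)
      · rcases Fin.eq_self_or_eq_succAbove v j with rfl | ⟨b, rfl⟩
        · rcases hv with ⟨rfl, hv⟩ | ⟨rfl, hv⟩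
          · exact absurd hfac (hv _)
          · simp [ImpFactor.eval]
        · have := hx _ ((hL' a b).2 hfac)
          simpa [ImpFactor.eval] using this
  · rintro ⟨i, hi⟩
    exact h3 ⟨v.succAbove i, Relation.TransGen.lift (r := fun a b => ImpFactor.imp a b ∈ L')
      (p := fun a b => ImpFactor.imp a b ∈ L) v.succAbove (fun a b hab => (hL' a b).1 hab) _ _ hi⟩

/-- A finite nonempty acyclic graph has a source. -/
theorem exists_source {k : ℕ} (L : List (ImpFactor (k+1)))
    (h : ¬ ∃ i : Fin (k+1), Relation.TransGen (fun a b => ImpFactor.imp a b ∈ L) i i) :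
    ∃ v, ∀ a, ImpFactor.imp a v ∉ L := by
  let r := Relation.TransGen (fun a b : Fin (k+1) => ImpFactor.imp a b ∈ L)
  have : Std.Irrefl r := ⟨fun a ha => h ⟨a, ha⟩⟩
  have : IsTrans (Fin (k+1)) r := ⟨fun a b c => Relation.TransGen.trans⟩
  have wf : WellFounded r := Finite.wellFounded_of_trans_of_irrefl r
  obtain ⟨v, _, hv⟩ := wf.has_min Set.univ ⟨0, trivial⟩
  exact ⟨v, fun a ha => hv a trivial (Relation.TransGen.single ha)⟩

/-- For a constraint `f` of arity `k ≥ 3` (written `k + 3`), if `R_f` admits a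
good factor list, then some constraint in `COMP₁(f) ∪ COMP₂(f)` (a single or a double
pinning of `f`) has an underlying relation admitting a good factor list. -/
theorem stmt18 (k : ℕ) (f : Constraint (k + 3)) (hf : hasGoodFactorList f) :
    (∃ (i : Fin (k + 3)) (c : Bool), hasGoodFactorList (pinC f i c)) ∨
    (∃ (i : Fin (k + 3)) (c : Bool) (i' : Fin (k + 2)) (d : Bool),
      hasGoodFactorList (pinC (pinC f i c) i' d)) := by
  obtain ⟨L, h1, h2, hinc, h3⟩ := hf
  have hL : preGood L f := ⟨h1, h2, h3⟩
  have hloop : ∀ a, ImpFactor.imp a a ∉ L := fun a ha => h3 ⟨a, Relation.TransGen.single ha⟩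
  obtain ⟨v, hv⟩ := exists_source L h3
  obtain ⟨L1, ⟨p1, p2, p3⟩, e1⟩ := preGood_pin L f hL v false (Or.inl ⟨rfl, hv⟩)
  by_cases hS : ∀ i, ∃ j, ImpFactor.imp i j ∈ L1 ∨ ImpFactor.imp j i ∈ L1
  · exact Or.inl ⟨v, false, L1, p1, p2, hS, p3⟩
  push Not at hS
  obtain ⟨u', hu'⟩ := hS
  have hu : ∀ j, j ≠ v → ImpFactor.imp (v.succAbove u') j ∉ L ∧
      ImpFactor.imp j (v.succAbove u') ∉ L := by
    intro j hj
    obtain ⟨b, rfl⟩ := Fin.exists_succAbove_eq hj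
    rw [← e1, ← e1]
    exact hu' b
  have huout : ∀ a, ImpFactor.imp (v.succAbove u') a ∉ L := by
    intro a
    by_cases ha : a = v
    · subst ha; exact hv _
    · exact (hu a ha).1
  by_cases hw : ∃ w, w ≠ v.succAbove u' ∧ ImpFactor.imp v w ∈ L
  · left
    obtain ⟨w, hwu, hw⟩ := hw
    obtain ⟨L2, ⟨q1, q2, q3⟩, e2⟩ :=
      preGood_pin L f hL (v.succAbove u') true (Or.inr ⟨rfl, huout⟩)
    refine ⟨v.succAbove u', true, L2, q1, q2, ?_, q3⟩
    intro i
    simp only [e2]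
    by_cases hi : (v.succAbove u').succAbove i = v
    · obtain ⟨b, rfl⟩ := Fin.exists_succAbove_eq hwu
      exact ⟨b, Or.inl (by rw [hi]; exact hw)⟩
    · obtain ⟨j, hj⟩ := hinc ((v.succAbove u').succAbove i)
      have hju : j ≠ v.succAbove u' := by
        rintro rfl
        rcases hj with hj | hj
        · exact (hu _ hi).2 hj
        · exact (hu _ hi).1 hj
      obtain ⟨b, rfl⟩ := Fin.exists_succAbove_eq hju
      exact ⟨b, hj⟩
  · right
    push Not at hw
    obtain ⟨L2, ⟨q1, q2, q3⟩, e2⟩ :=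
      preGood_pin L1 (pinC f v false) ⟨p1, p2, p3⟩ u' true (Or.inr ⟨rfl, fun a => (hu' a).1⟩)
    refine ⟨v, false, u', true, L2, q1, q2, ?_, q3⟩
    intro i
    simp only [e2, e1]
    have hi : u'.succAbove i ≠ u' := Fin.succAbove_ne _ _
    obtain ⟨j, hj⟩ := hinc (v.succAbove (u'.succAbove i))
    have hjv : j ≠ v := by
      rintro rfl
      rcases hj with hj | hj
      · exact hv _ hj
      · exact hw _ (fun h => hi (Fin.succAbove_right_injective h)) hj
    obtain ⟨b, rfl⟩ := Fin.exists_succAbove_eq hjv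
    have hbu : b ≠ u' := by
      rintro rfl
      rcases hj with hj | hj
      · exact (hu' _).2 ((e1 _ _).2 hj)
      · exact (hu' _).1 ((e1 _ _).2 hj)
    obtain ⟨d, rfl⟩ := Fin.exists_succAbove_eq hbu
    exact ⟨d, hj⟩
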